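/- For the elephant random walk with memory parameter p ∈ [0, 1) on a Cayley graph that is the d-regular tree T_d (d ≥ 3), the martingale M_n = ∑_{k=1}^n Y_k (where Y_{k} = Δ_{k} − Δ_{k−1} − G_{k−1} and G_k = E[Δ_{k+1} − Δ_k | F_k]) has predictable quadratic variation ⟨M⟩_n = ∑_{k=1}^n E[Y_k² | F_{k−1}] = n − ∑_{k=0}^{n−1} G_k², and ⟨M⟩_n / n → 4(d − 1)/d² almost surely as n → ∞. -/

import Mathlib

open MeasureTheory ProbabilityTheory Filter

noncomputable section

/-- The Cayley graph of a group with respect to a finite set of generators. -/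
def cayleyGraph {G : Type*} [Group G] (S : Finset G) : SimpleGraph G where
  Adj x y := x ≠ y ∧ (y * x⁻¹ ∈ S ∨ x * y⁻¹ ∈ S)
  symm := by
    constructor
    rintro x y ⟨h1, h2⟩
    refine ⟨h1.symm, ?_⟩
    rcases h2 with h | h
    · exact Or.inr h
    · exact Or.inl h
  loopless := ⟨fun x h => h.1 rfl⟩

/-- The elephant random walk (ERW) with memory parameter `p` on the Cayley graph of a
group `G` with respect to a symmetric generating set `S` of cardinality `d`, not
containing the identity, whose Cayley graph is a tree (hence the `d`-regular tree
`T_d`).  The steps are `g 1, g 2, …` (the value of `g 0` is irrelevant).  The law of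
the process is characterised by: `g 1` is uniform on `S`, and, conditionally on the
first `n` steps being `s 1, …, s n`, the next step `g (n+1)` equals `a ∈ S` with
probability `p * N/n + ((1-p)/(d-1)) * (n-N)/n`, where `N = #{1 ≤ k ≤ n : s k = a}`;
this is precisely the probability that the walker, recalling a uniform past epoch
`D ∈ {1, …, n}`, repeats `g D` with probability `p` and takes any given other step
with probability `(1-p)/(d-1)`. -/
structure ERW (G : Type*) [Group G] [DecidableEq G] (d : ℕ) (p : ℝ)
    (Ω : Type*) [MeasurableSpace Ω] (P : Measure Ω) where
  S : Finset G
  card_S : S.card = d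
  symm_S : ∀ s ∈ S, s⁻¹ ∈ S
  one_not_mem : (1 : G) ∉ S
  tree : (cayleyGraph S).IsTree
  g : ℕ → Ω → G
  meas_g : ∀ n a, MeasurableSet {ω | g n ω = a}
  mem_S : ∀ n, 1 ≤ n → ∀ ω, g n ω ∈ S
  init : ∀ a ∈ S, (P {ω | g 1 ω = a}).toReal = 1 / d
  update : ∀ n, 1 ≤ n → ∀ s : ℕ → G, ∀ a ∈ S,
    (P ({ω | ∀ k ∈ Finset.Icc 1 n, g k ω = s k} ∩ {ω | g (n + 1) ω = a})).toReal
      = (p * ((((Finset.Icc 1 n).filter fun k => s k = a).card : ℝ) / n)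
          + (1 - p) / ((d : ℝ) - 1)
            * (((n : ℝ) - (((Finset.Icc 1 n).filter fun k => s k = a).card : ℝ)) / n))
        * (P {ω | ∀ k ∈ Finset.Icc 1 n, g k ω = s k}).toReal

namespace ERW

variable {G : Type*} [Group G] [DecidableEq G] {d : ℕ} {p : ℝ}
  {Ω : Type*} [MeasurableSpace Ω] {P : Measure Ω}

/-- The position `w n = g n ⋯ g 1` of the walk at time `n`. -/
def pos (E : ERW G d p Ω P) : ℕ → Ω → G
  | 0 => fun _ => 1
  | n + 1 => fun ω => E.g (n + 1) ω * E.pos n ω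

/-- `Δ n`: the (word-metric) distance of the walker from the root at time `n`. -/
def dist (E : ERW G d p Ω P) (n : ℕ) (ω : Ω) : ℕ :=
  (cayleyGraph E.S).dist 1 (E.pos n ω)

/-- `N n a`: the number of `a`-steps taken by time `n`. -/
def count (E : ERW G d p Ω P) (a : G) (n : ℕ) (ω : Ω) : ℕ :=
  ((Finset.Icc 1 n).filter fun k => E.g k ω = a).card

/-- `γ n`: the unique step decreasing the distance to the root by 1
(a junk value if the walker is at the root). -/
def gammaStep (E : ERW G d p Ω P) (n : ℕ) (ω : Ω) : G :=
  @Classical.epsilon G ⟨1⟩ fun s =>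
    s ∈ E.S ∧ (cayleyGraph E.S).dist 1 (s * E.pos n ω) + 1 = E.dist n ω

/-- `ℓ n = N n (γ n)` if the walker is away from the root, and `0` otherwise. -/
def ell (E : ERW G d p Ω P) (n : ℕ) (ω : Ω) : ℕ :=
  if E.pos n ω = 1 then 0 else E.count (E.gammaStep n ω) n ω

/-- `Ξ n = (1/n) ∑_{k=0}^{n-1} (ℓ k / k - 1(Δ k > 0)/d)` (with the convention
`ℓ 0 / 0 = 0`, automatic since division by zero yields zero). -/
def Xi (E : ERW G d p Ω P) (n : ℕ) (ω : Ω) : ℝ :=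
  (1 / n) * ∑ k ∈ Finset.range n,
    ((E.ell k ω : ℝ) / k - (if 0 < E.dist k ω then 1 else 0) / d)

/-- The natural filtration `F n` generated by the steps up to time `n`. -/
def filt (E : ERW G d p Ω P) (n : ℕ) : MeasurableSpace Ω :=
  ⨆ k ∈ Finset.Icc 1 n, MeasurableSpace.comap (E.g k) ⊤

/-- `G n = E[Δ (n+1) - Δ n | F n]`. -/
def drift (E : ERW G d p Ω P) (n : ℕ) : Ω → ℝ :=
  P[fun ω => ((E.dist (n + 1) ω : ℝ) - (E.dist n ω : ℝ)) | E.filt n]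

/-- The martingale differences `Y k = Δ k - Δ (k-1) - G (k-1)`. -/
def mdiff (E : ERW G d p Ω P) (k : ℕ) (ω : Ω) : ℝ :=
  (E.dist k ω : ℝ) - (E.dist (k - 1) ω : ℝ) - E.drift (k - 1) ω

/-- The martingale `M n = ∑_{k=1}^n Y k`. -/
def mart (E : ERW G d p Ω P) (n : ℕ) (ω : Ω) : ℝ :=
  ∑ k ∈ Finset.Icc 1 n, E.mdiff k ω

end ERW

/-- The rate `r n`: `√n` in the subcritical regime `p < p_d = (d+1)/(2d)`,
`√(n / log n)` in the critical regime `p = p_d`, and `n ^ (d(1-p)/(d-1))` in the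
supercritical regime `p > p_d`. -/
def rate (p : ℝ) (d : ℕ) (n : ℕ) : ℝ :=
  if p < ((d : ℝ) + 1) / (2 * d) then Real.sqrt n
  else if p = ((d : ℝ) + 1) / (2 * d) then Real.sqrt ((n : ℝ) / Real.log n)
  else (n : ℝ) ^ ((d : ℝ) * (1 - p) / ((d : ℝ) - 1))

/-!
Every step changes `Δ` by `±1`, so the conditional variance of an increment is `1 - G²`; this is
the formula for `⟨M⟩`, and its asymptotics reduce to `G n → 1 - 2 / d`.

A process with bounded increments is, up to `o(n)`, the sum of its conditional increments (the
strong law for `L²` martingales: Kronecker's lemma applied to `∑ (M (k + 1) - M k) / (k + 1)`).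
For the counts `N n a` this says that `z n = N n a / n - 1 / d` is the Cesàro mean of `α * z k` up
to `o(1)`, with `α = (p d - 1) / (d - 1)` and `|α| < 1`, so `limsup |z n| ≤ |α| limsup |z n|` and
`z n → 0`. All steps are therefore asymptotically equally likely.

In a tree exactly one of the `d` steps at a vertex other than the root decreases the distance to
the root, so `G n` is asymptotic to `1 - 2 / d` away from the root and to `1` at the root. Both are
positive, so `Δ` grows linearly, the root is visited finitely often, and `G n → 1 - 2 / d`.
-/

section Cesaro

variable {F : Type*} [NormedAddCommGroup F] [NormedSpace ℝ F]

lemma eventually_norm_cesaro_lt {y : ℕ → F} {L M : ℝ} (hy : ∀ᶠ n in atTop, ‖y n‖ ≤ L)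
    (hLM : L < M) : ∀ᶠ n : ℕ in atTop, ‖(n : ℝ)⁻¹ • ∑ k ∈ Finset.range n, y k‖ < M := by
  have hmax : Tendsto (fun k => max ‖y k‖ L) atTop (nhds L) :=
    tendsto_const_nhds.congr' (hy.mono fun k hk => (max_eq_right hk).symm)
  filter_upwards [hmax.cesaro.eventually_lt_const hLM] with n hn
  refine lt_of_le_of_lt ?_ hn
  calc ‖(n : ℝ)⁻¹ • ∑ k ∈ Finset.range n, y k‖
      = (n : ℝ)⁻¹ * ‖∑ k ∈ Finset.range n, y k‖ := by
        rw [norm_smul, Real.norm_of_nonneg (by positivity)]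
    _ ≤ (n : ℝ)⁻¹ * ∑ k ∈ Finset.range n, max ‖y k‖ L := by
        gcongr
        exact norm_sum_le_of_le _ fun k _ => le_max_left _ _

lemma tendsto_zero_of_eq_cesaro_add {z y e : ℕ → F} {r : ℝ} (hr0 : 0 ≤ r) (hr1 : r < 1)
    (hz : IsBoundedUnder (· ≤ ·) atTop fun n => ‖z n‖)
    (hy : ∀ᶠ n in atTop, ‖y n‖ ≤ r * ‖z n‖) (he : Tendsto e atTop (nhds 0))
    (hzy : ∀ᶠ n : ℕ in atTop, z n = (n : ℝ)⁻¹ • ∑ k ∈ Finset.range n, y k + e n) :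
    Tendsto z atTop (nhds 0) := by
  set L := limsup (fun n => ‖z n‖) atTop
  have hcob : IsCoboundedUnder (· ≤ ·) atTop fun n => ‖z n‖ :=
    isCoboundedUnder_le_of_le atTop fun n => norm_nonneg (z n)
  have limsup_le : ∀ ε > 0, L ≤ r * L + ε := by
    intro ε hε
    have hyL : ∀ᶠ n in atTop, ‖y n‖ ≤ r * (L + ε / 3) := by
      filter_upwards [hy, eventually_lt_of_limsup_lt (show L < L + ε / 3 by linarith) hz]
        with n hn hzn
      exact hn.trans (by gcongr)
    have hlt : r * (L + ε / 3) < r * L + 2 * ε / 3 := by nlinarith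
    refine limsup_le_of_le hcob ?_
    filter_upwards [hzy, eventually_norm_cesaro_lt hyL hlt,
      he.norm.eventually_lt_const (show ‖(0 : F)‖ < ε / 3 by simpa using hε)] with n hn hyn hen
    rw [hn]
    exact (norm_add_le _ _).trans (by linarith)
  have hL : L ≤ 0 := by
    have := le_of_forall_pos_le_add limsup_le
    nlinarith
  refine tendsto_zero_iff_norm_tendsto_zero.2 (tendsto_order.2 ⟨fun a ha => ?_, fun a ha => ?_⟩)
  · exact Eventually.of_forall fun n => ha.trans_le (norm_nonneg _)
  · exact eventually_lt_of_limsup_lt (hL.trans_lt ha) hz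

lemma tendsto_cesaro_zero_of_tendsto_sum_inv_smul {x : ℕ → F} {s : F}
    (h : Tendsto (fun n => ∑ k ∈ Finset.range n, ((k : ℝ) + 1)⁻¹ • x k) atTop (nhds s)) :
    Tendsto (fun n : ℕ => (n : ℝ)⁻¹ • ∑ k ∈ Finset.range n, x k) atTop (nhds 0) := by
  set S : ℕ → F := fun n => ∑ k ∈ Finset.range n, ((k : ℝ) + 1)⁻¹ • x k with hS
  have abel (n : ℕ) : ∑ k ∈ Finset.range n, x k = (n : ℝ) • S n - ∑ k ∈ Finset.range n, S k := by
    induction n with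
    | zero => simp
    | succ n ih =>
      have hx : x n = ((n : ℝ) + 1) • (S (n + 1) - S n) := by
        simp only [hS, Finset.sum_range_succ, add_sub_cancel_left]
        rw [smul_inv_smul₀ (by positivity)]
      rw [Finset.sum_range_succ, Finset.sum_range_succ, ih, hx]
      push_cast
      module
  rw [← sub_self s]
  refine (h.sub h.cesaro_smul).congr' ?_
  filter_upwards [eventually_ne_atTop 0] with n hn
  rw [abel, smul_sub, inv_smul_smul₀ (Nat.cast_ne_zero.2 hn)]

end Cesaro

section Martingale

variable {Ω : Type*} {mΩ : MeasurableSpace Ω} {μ : Measure Ω}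
  {ℱ : Filtration ℕ mΩ} {M : ℕ → Ω → ℝ}

lemma martingale_condExp_succ_sub_eq_zero (hM : Martingale M ℱ μ) (n : ℕ) :
    μ[M (n + 1) - M n | ℱ n] =ᵐ[μ] 0 := by
  filter_upwards [condExp_sub (hM.integrable (n + 1)) (hM.integrable n) (ℱ n),
    hM.condExp_ae_eq n.le_succ, hM.condExp_ae_eq (le_refl n)] with ω hsub hsucc hself
  simp [hsub, hsucc, hself]

lemma div_eq_cesaro_condExp_add_martingalePart_div (f : ℕ → Ω → ℝ) (n : ℕ) (ω : Ω) :
    f n ω / n = (n : ℝ)⁻¹ * ∑ k ∈ Finset.range n, (μ[f (k + 1) - f k | ℱ k]) ω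
      + martingalePart f ℱ μ n ω / n := by
  rw [martingalePart, predictablePart, Pi.sub_apply, Finset.sum_apply]
  ring

variable [IsFiniteMeasure μ]

lemma integral_mul_martingale_succ_sub_eq_zero (hM : Martingale M ℱ μ)
    (hL2 : ∀ n, MemLp (M n) 2 μ) (n : ℕ) : ∫ ω, M n ω * (M (n + 1) ω - M n ω) ∂μ = 0 := by
  have hprod : Integrable (M n * (M (n + 1) - M n)) μ :=
    (hL2 n).integrable_mul ((hL2 (n + 1)).sub (hL2 n))
  have pull_out : μ[M n * (M (n + 1) - M n) | ℱ n] =ᵐ[μ] 0 := by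
    filter_upwards [condExp_mul_of_stronglyMeasurable_left (hM.stronglyMeasurable n) hprod
      ((hM.integrable (n + 1)).sub (hM.integrable n)),
      martingale_condExp_succ_sub_eq_zero hM n] with ω hmul hzero
    simp [hmul, hzero]
  calc ∫ ω, M n ω * (M (n + 1) ω - M n ω) ∂μ
      = ∫ ω, (μ[M n * (M (n + 1) - M n) | ℱ n]) ω ∂μ := (integral_condExp (ℱ.le n)).symm
    _ = 0 := by simp [integral_congr_ae pull_out]

lemma martingale_integral_sq_eq_add_sum (hM : Martingale M ℱ μ) (hL2 : ∀ n, MemLp (M n) 2 μ)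
    (n : ℕ) : ∫ ω, M n ω ^ 2 ∂μ =
      ∫ ω, M 0 ω ^ 2 ∂μ + ∑ k ∈ Finset.range n, ∫ ω, (M (k + 1) ω - M k ω) ^ 2 ∂μ := by
  induction n with
  | zero => simp
  | succ n ih =>
    have hsub := (hL2 (n + 1)).sub (hL2 n)
    have hcross : Integrable (fun ω => 2 * (M n ω * (M (n + 1) ω - M n ω))) μ :=
      ((hL2 n).integrable_mul hsub).const_mul 2
    rw [Finset.sum_range_succ, ← add_assoc, ← ih]
    calc ∫ ω, M (n + 1) ω ^ 2 ∂μ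
        = ∫ ω, (M n ω ^ 2 + 2 * (M n ω * (M (n + 1) ω - M n ω))
            + (M (n + 1) ω - M n ω) ^ 2) ∂μ := by congr with ω; ring
      _ = ∫ ω, M n ω ^ 2 ∂μ + 2 * ∫ ω, M n ω * (M (n + 1) ω - M n ω) ∂μ
            + ∫ ω, (M (n + 1) ω - M n ω) ^ 2 ∂μ := by
          rw [← integral_const_mul, ← integral_add (hL2 n).integrable_sq hcross]
          exact integral_add ((hL2 n).integrable_sq.add hcross) hsub.integrable_sq
      _ = _ := by rw [integral_mul_martingale_succ_sub_eq_zero hM hL2]; ring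

lemma martingale_ae_exists_tendsto_of_integral_sq_le (hM : Martingale M ℱ μ)
    (hL2 : ∀ n, MemLp (M n) 2 μ) {C : ℝ} (hC : ∀ n, ∫ ω, M n ω ^ 2 ∂μ ≤ C) :
    ∀ᵐ ω ∂μ, ∃ c, Tendsto (fun n => M n ω) atTop (nhds c) := by
  refine hM.submartingale.exists_ae_tendsto_of_bdd (R := Real.toNNReal (μ.real Set.univ + C))
    fun n => ?_
  rw [eLpNorm_one_eq_lintegral_enorm, ← ofReal_integral_norm_eq_lintegral_enorm (hM.integrable n)]
  refine ENNReal.ofReal_le_ofReal ?_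
  calc ∫ ω, ‖M n ω‖ ∂μ ≤ ∫ ω, (1 + M n ω ^ 2) ∂μ := by
        refine integral_mono (hM.integrable n).norm
          ((integrable_const 1).add (hL2 n).integrable_sq) fun ω => ?_
        simp only [Real.norm_eq_abs, ← sq_abs (M n ω)]
        nlinarith [sq_nonneg (|M n ω| - 1), abs_nonneg (M n ω)]
    _ = μ.real Set.univ + ∫ ω, M n ω ^ 2 ∂μ := by
        simp [integral_add (integrable_const (1 : ℝ)) (hL2 n).integrable_sq]
    _ ≤ μ.real Set.univ + C := by gcongr; exact hC n

lemma martingale_sum_smul_succ_sub (hM : Martingale M ℱ μ) (c : ℕ → ℝ) :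
    Martingale (fun n => ∑ k ∈ Finset.range n, c k • (M (k + 1) - M k)) ℱ μ := by
  refine martingale_of_condExp_sub_eq_zero_nat (fun n => ?_) (fun n => ?_) fun n => ?_
  · refine Finset.stronglyMeasurable_sum _ fun k hk => ?_
    have hkn : k + 1 ≤ n := Finset.mem_range.1 hk
    exact (((hM.stronglyMeasurable (k + 1)).mono (ℱ.mono hkn)).sub
      ((hM.stronglyMeasurable k).mono (ℱ.mono (k.le_succ.trans hkn)))).const_smul (c k)
  · exact integrable_finsetSum' _ fun k _ =>
      ((hM.integrable (k + 1)).sub (hM.integrable k)).smul (c k)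
  · rw [Finset.sum_range_succ, add_sub_cancel_left]
    filter_upwards [condExp_smul (c n) (M (n + 1) - M n) (ℱ n),
      martingale_condExp_succ_sub_eq_zero hM n] with ω hsmul hzero
    simp [hsmul, hzero]

lemma summable_inv_succ_sq : Summable fun k : ℕ => (((k : ℝ) + 1)⁻¹) ^ 2 := by
  simpa using (summable_nat_add_iff 1).2 (Real.summable_nat_pow_inv.2 one_lt_two)

theorem martingale_ae_tendsto_div_zero (hM : Martingale M ℱ μ) (hL2 : ∀ n, MemLp (M n) 2 μ)
    {C : ℝ} (hC : ∀ n, ∫ ω, (M (n + 1) ω - M n ω) ^ 2 ∂μ ≤ C) :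
    ∀ᵐ ω ∂μ, Tendsto (fun n : ℕ => M n ω / n) atTop (nhds 0) := by
  set N : ℕ → Ω → ℝ :=
    fun n => ∑ k ∈ Finset.range n, ((k : ℝ) + 1)⁻¹ • (M (k + 1) - M k) with hN
  have hNmart : Martingale N ℱ μ := martingale_sum_smul_succ_sub hM _
  have hNL2 (n : ℕ) : MemLp (N n) 2 μ :=
    memLp_finsetSum' _ fun k _ => ((hL2 (k + 1)).sub (hL2 k)).const_smul _
  have hNincr (k : ℕ) : ∫ ω, (N (k + 1) ω - N k ω) ^ 2 ∂μ ≤ (((k : ℝ) + 1)⁻¹) ^ 2 * C := by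
    simp only [hN, Finset.sum_range_succ, Pi.add_apply, add_sub_cancel_left, Pi.smul_apply,
      Pi.sub_apply, smul_eq_mul, mul_pow, integral_const_mul]
    gcongr
    exact hC k
  have hNbdd (n : ℕ) : ∫ ω, N n ω ^ 2 ∂μ ≤ ∑' k : ℕ, (((k : ℝ) + 1)⁻¹) ^ 2 * C := by
    have hC0 : 0 ≤ C := (integral_nonneg fun ω => sq_nonneg _).trans (hC 0)
    rw [martingale_integral_sq_eq_add_sum hNmart hNL2]
    calc ∫ ω, N 0 ω ^ 2 ∂μ + ∑ k ∈ Finset.range n, ∫ ω, (N (k + 1) ω - N k ω) ^ 2 ∂μ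
        = ∑ k ∈ Finset.range n, ∫ ω, (N (k + 1) ω - N k ω) ^ 2 ∂μ := by simp [hN]
      _ ≤ ∑ k ∈ Finset.range n, (((k : ℝ) + 1)⁻¹) ^ 2 * C := Finset.sum_le_sum fun k _ => hNincr k
      _ ≤ ∑' k : ℕ, (((k : ℝ) + 1)⁻¹) ^ 2 * C :=
          (summable_inv_succ_sq.mul_right C).sum_le_tsum _ fun k _ => by positivity
  filter_upwards [martingale_ae_exists_tendsto_of_integral_sq_le hNmart hNL2 hNbdd] with ω ⟨c, hc⟩
  have hcesaro : Tendsto (fun n : ℕ => (n : ℝ)⁻¹ • ∑ k ∈ Finset.range n, (M (k + 1) ω - M k ω))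
      atTop (nhds 0) :=
    tendsto_cesaro_zero_of_tendsto_sum_inv_smul (s := c) (by simpa [hN] using hc)
  rw [← add_zero 0]
  refine (hcesaro.add (tendsto_const_div_atTop_nhds_zero_nat (M 0 ω))).congr fun n => ?_
  rw [Finset.sum_range_sub fun k => M k ω, smul_eq_mul]
  ring

theorem ae_tendsto_martingalePart_div_zero {f : ℕ → Ω → ℝ} (hf : StronglyAdapted ℱ f)
    (hL2 : ∀ n, MemLp (f n) 2 μ) {R : ℝ} (hR : ∀ᵐ ω ∂μ, ∀ n, ‖f (n + 1) ω - f n ω‖ ≤ R) :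
    ∀ᵐ ω ∂μ, Tendsto (fun n : ℕ => martingalePart f ℱ μ n ω / n) atTop (nhds 0) := by
  have hmart : Martingale (martingalePart f ℱ μ) ℱ μ :=
    martingale_martingalePart hf fun n => (hL2 n).integrable one_le_two
  have hmartL2 (n : ℕ) : MemLp (martingalePart f ℱ μ n) 2 μ :=
    (hL2 n).sub (memLp_finsetSum' _ fun k _ => ((hL2 (k + 1)).sub (hL2 k)).condExp one_le_two)
  refine martingale_ae_tendsto_div_zero hmart hmartL2 (C := μ.real Set.univ * (2 * R) ^ 2)
    fun n => ?_
  calc ∫ ω, (martingalePart f ℱ μ (n + 1) ω - martingalePart f ℱ μ n ω) ^ 2 ∂μ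
      ≤ ∫ _, (2 * R) ^ 2 ∂μ := by
        refine integral_mono_ae ((hmartL2 (n + 1)).sub (hmartL2 n)).integrable_sq
          (integrable_const _) ?_
        filter_upwards [martingalePart_bdd_difference ℱ hR] with ω hω
        exact sq_le_sq' (abs_le.1 (hω n)).1 (abs_le.1 (hω n)).2
    _ = μ.real Set.univ * (2 * R) ^ 2 := by simp

end Martingale

section CondExp

variable {Ω : Type*} {mΩ : MeasurableSpace Ω} {μ : Measure Ω}

lemma measurable_comap_top_of_factorsThrough {ι β : Type*} [MeasurableSpace β] [Nonempty β]
    {X : Ω → ι} {f : Ω → β} (hf : f.FactorsThrough X) :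
    Measurable[MeasurableSpace.comap X ⊤] f := by
  obtain ⟨e, rfl⟩ := (Function.factorsThrough_iff f).1 hf
  exact fun B _ => ⟨e ⁻¹' B, trivial, rfl⟩

lemma comap_top_le_of_countable {ι : Type*} [Countable ι] {X : Ω → ι}
    (hX : ∀ i, MeasurableSet (X ⁻¹' {i})) : MeasurableSpace.comap X ⊤ ≤ mΩ := by
  let _ : MeasurableSpace ι := ⊤
  exact (measurable_to_countable' hX).comap_le

lemma setIntegral_preimage_eq_sum {ι : Type*} {X : Ω → ι} {B : Finset ι}
    (hX : ∀ i ∈ B, MeasurableSet (X ⁻¹' {i})) {f : Ω → ℝ} (hf : Integrable f μ) :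
    ∫ ω in X ⁻¹' B, f ω ∂μ = ∑ i ∈ B, ∫ ω in X ⁻¹' {i}, f ω ∂μ := by
  have hunion : X ⁻¹' B = ⋃ i ∈ B, X ⁻¹' {i} := by ext; simp
  rw [hunion]
  refine integral_biUnion_finset B hX ?_
    fun i _ => hf.integrableOn
  exact fun i _ j _ hij => Disjoint.preimage X (Set.disjoint_singleton.2 hij)

lemma setIntegral_comp_eq_sum {ι : Type*} {X : Ω → ι} {B : Finset ι} (hB : ∀ ω, X ω ∈ B)
    (hX : ∀ i ∈ B, MeasurableSet (X ⁻¹' {i})) {φ : ι → ℝ} {A : Set Ω}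
    (hφ : IntegrableOn (fun ω => φ (X ω)) A μ) :
    ∫ ω in A, φ (X ω) ∂μ = ∑ i ∈ B, φ i * μ.real (X ⁻¹' {i} ∩ A) := by
  have huniv : X ⁻¹' B = Set.univ := Set.eq_univ_of_forall hB
  rw [← setIntegral_univ, ← huniv, setIntegral_preimage_eq_sum hX hφ]
  refine Finset.sum_congr rfl fun i hi => ?_
  have hconst : Set.EqOn (fun ω => φ (X ω)) (fun _ => φ i) (X ⁻¹' {i}) :=
    fun ω hω => congrArg φ hω
  rw [setIntegral_congr_fun (hX i hi) hconst, setIntegral_const, smul_eq_mul, mul_comm,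
    measureReal_restrict_apply (hX i hi)]

variable [IsFiniteMeasure μ]

lemma condExp_sq_sub_condExp_of_sq_eq_one {m : MeasurableSpace Ω} (hm : m ≤ mΩ) {X : Ω → ℝ}
    (hX : MemLp X 2 μ) (hsq : X ^ 2 =ᵐ[μ] 1) :
    μ[fun ω => (X ω - (μ[X | m]) ω) ^ 2 | m] =ᵐ[μ] fun ω => 1 - (μ[X | m]) ω ^ 2 := by
  have hsq' : μ[X ^ 2 | m] =ᵐ[μ] fun _ => 1 :=
    (condExp_congr_ae hsq).trans (condExp_const hm (1 : ℝ)).eventuallyEq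
  filter_upwards [condVar_ae_eq_condExp_sq_sub_sq_condExp hm hX, hsq'] with ω hvar hone
  rw [Pi.sub_apply, hone] at hvar
  exact hvar

lemma memLp_of_factorsThrough {ι : Type*} [Finite ι] {X : Ω → ι}
    (hX : MeasurableSpace.comap X ⊤ ≤ mΩ) {f : Ω → ℝ} (hf : f.FactorsThrough X) (q : ENNReal) :
    MemLp f q μ := by
  have hmeas : Measurable f := (measurable_comap_top_of_factorsThrough hf).mono hX le_rfl
  obtain ⟨e, rfl⟩ := (Function.factorsThrough_iff f).1 hf
  obtain ⟨C, hC⟩ := (Set.finite_range fun i => ‖e i‖).bddAbove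
  exact .of_bound hmeas.aestronglyMeasurable C (.of_forall fun ω => hC ⟨X ω, rfl⟩)

lemma ae_eq_condExp_comap_of_finite {ι : Type*} [Finite ι] {X : Ω → ι}
    (hX : MeasurableSpace.comap X ⊤ ≤ mΩ) {f g : Ω → ℝ} (hf : Integrable f μ)
    (hg : g.FactorsThrough X)
    (hfg : ∀ ω, ∫ ω' in X ⁻¹' {X ω}, f ω' ∂μ = g ω * μ.real (X ⁻¹' {X ω})) :
    g =ᵐ[μ] μ[f | MeasurableSpace.comap X ⊤] := by
  have hgint : Integrable g μ := memLp_one_iff_integrable.1 (memLp_of_factorsThrough hX hg 1)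
  refine ae_eq_condExp_of_forall_setIntegral_eq hX hf (fun _ _ _ => hgint.integrableOn) ?_
    (measurable_comap_top_of_factorsThrough hg).aestronglyMeasurable
  rintro _ ⟨B, -, rfl⟩ -
  lift B to Finset ι using B.toFinite
  have hfibre (i : ι) : MeasurableSet (X ⁻¹' {i}) := hX _ ⟨{i}, trivial, rfl⟩
  rw [setIntegral_preimage_eq_sum (fun i _ => hfibre i) hgint,
    setIntegral_preimage_eq_sum (fun i _ => hfibre i) hf]
  refine Finset.sum_congr rfl fun i _ => ?_
  rcases (X ⁻¹' {i}).eq_empty_or_nonempty with hempty | ⟨ω, rfl⟩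
  · simp [hempty]
  · have hconst : Set.EqOn g (fun _ => g ω) (X ⁻¹' {X ω}) := fun ω' hω' => hg hω'
    rw [setIntegral_congr_fun (hfibre _) hconst, setIntegral_const, hfg,
      smul_eq_mul, mul_comm]

end CondExp

section Tree

lemma isTree_existsUnique_adj_dist_add_one {V : Type*} {T : SimpleGraph V} (hT : T.IsTree)
    {r w : V} (hw : w ≠ r) : ∃! v, T.Adj w v ∧ T.dist r v + 1 = T.dist r w := by
  obtain ⟨q, hq, hqlen⟩ := hT.connected.exists_path_of_dist w r
  have hnil : ¬ q.Nil := fun h => hw h.eq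
  refine ⟨q.snd, ⟨q.adj_snd hnil, ?_⟩, ?_⟩
  · have hle : T.dist q.snd r ≤ q.tail.length := SimpleGraph.dist_le q.tail
    have hlen := SimpleGraph.Walk.length_tail_add_one hnil
    have hstep := hT.dist_eq_dist_add_one_of_adj r (q.adj_snd hnil)
    rw [SimpleGraph.dist_comm] at hqlen hle
    omega
  · rintro v ⟨hadj, hv⟩
    obtain ⟨q', -, hqlen'⟩ := hT.connected.exists_path_of_dist v r
    have hcons : (q'.cons hadj).IsPath := by
      refine SimpleGraph.Walk.isPath_of_length_eq_dist _ ?_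
      rw [SimpleGraph.Walk.length_cons, hqlen', SimpleGraph.dist_comm, hv, SimpleGraph.dist_comm]
    have hpath : q'.cons hadj = q :=
      congrArg Subtype.val ((hT.isAcyclic.subsingleton_path w r).elim ⟨_, hcons⟩ ⟨q, hq⟩)
    simp [← hpath]

end Tree

namespace cayleyGraph

variable {G : Type*} [Group G] {S : Finset G}

lemma adj_mul_left (hone : 1 ∉ S) {a : G} (ha : a ∈ S) (w : G) :
    (cayleyGraph S).Adj w (a * w) :=
  ⟨fun h => hone (right_eq_mul.1 h ▸ ha), Or.inl (by simpa using ha)⟩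

lemma mul_inv_mem_of_adj (hsymm : ∀ s ∈ S, s⁻¹ ∈ S) {v w : G} (h : (cayleyGraph S).Adj w v) :
    v * w⁻¹ ∈ S :=
  h.2.elim id fun h => by simpa using hsymm _ h

/-- The change `±1` of the distance to the root caused by the step `a` at the vertex `w`,
real-valued because it is averaged against transition probabilities. -/
def radialIncr (S : Finset G) (a w : G) : ℝ :=
  (cayleyGraph S).dist 1 (a * w) - (cayleyGraph S).dist 1 w

lemma radialIncr_eq_one_or_neg_one (hone : 1 ∉ S) (htree : (cayleyGraph S).IsTree) {a : G}
    (ha : a ∈ S) (w : G) : radialIncr S a w = 1 ∨ radialIncr S a w = -1 := by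
  rcases htree.dist_eq_dist_add_one_of_adj 1 (adj_mul_left hone ha w) with h | h
  · right; simp [radialIncr, h]
  · left; simp [radialIncr, h]

lemma radialIncr_sq (hone : 1 ∉ S) (htree : (cayleyGraph S).IsTree) {a : G}
    (ha : a ∈ S) (w : G) : radialIncr S a w ^ 2 = 1 :=
  sq_eq_one_iff.2 (radialIncr_eq_one_or_neg_one hone htree ha w)

lemma radialIncr_one_right (hone : 1 ∉ S) (htree : (cayleyGraph S).IsTree) {a : G}
    (ha : a ∈ S) : radialIncr S a 1 = 1 := by
  refine (radialIncr_eq_one_or_neg_one hone htree ha 1).resolve_right fun h => ?_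
  have : (0 : ℝ) ≤ (cayleyGraph S).dist 1 (a * 1) := Nat.cast_nonneg _
  simp only [radialIncr, SimpleGraph.dist_self, Nat.cast_zero, sub_zero] at h
  linarith

lemma exists_radialIncr_eq_neg_one_iff (hsymm : ∀ s ∈ S, s⁻¹ ∈ S) (hone : 1 ∉ S)
    (htree : (cayleyGraph S).IsTree) {w : G} (hw : w ≠ 1) :
    ∃ b ∈ S, ∀ a ∈ S, radialIncr S a w = -1 ↔ a = b := by
  obtain ⟨v, ⟨hadj, hdist⟩, hunique⟩ := isTree_existsUnique_adj_dist_add_one htree hw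
  refine ⟨v * w⁻¹, mul_inv_mem_of_adj hsymm hadj, fun a ha => ⟨fun h => ?_, ?_⟩⟩
  · refine eq_mul_inv_of_mul_eq (hunique (a * w) ⟨adj_mul_left hone ha w, ?_⟩)
    have : ((cayleyGraph S).dist 1 (a * w) : ℝ) + 1 = (cayleyGraph S).dist 1 w := by
      rw [radialIncr] at h
      linarith
    exact_mod_cast this
  · rintro rfl
    simp [radialIncr, ← hdist]

lemma sum_radialIncr_of_ne_one (hsymm : ∀ s ∈ S, s⁻¹ ∈ S) (hone : 1 ∉ S)
    (htree : (cayleyGraph S).IsTree) {w : G} (hw : w ≠ 1) :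
    ∑ a ∈ S, radialIncr S a w = S.card - 2 := by
  classical
  obtain ⟨b, hb, hdown⟩ := exists_radialIncr_eq_neg_one_iff hsymm hone htree hw
  have hincr : ∀ a ∈ S, radialIncr S a w = 1 - if a = b then 2 else 0 := by
    intro a ha
    split_ifs with hab
    · rw [(hdown a ha).2 hab]
      norm_num
    · rw [(radialIncr_eq_one_or_neg_one hone htree ha w).resolve_right (mt (hdown a ha).1 hab),
        sub_zero]
  rw [Finset.sum_congr rfl hincr, Finset.sum_sub_distrib, Finset.sum_ite_eq' S b, if_pos hb]
  simp

lemma sum_radialIncr_one (hone : 1 ∉ S) (htree : (cayleyGraph S).IsTree) :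
    ∑ a ∈ S, radialIncr S a 1 = S.card := by
  rw [Finset.sum_congr rfl fun a ha => radialIncr_one_right hone htree ha]
  simp

lemma card_sub_two_le_sum_radialIncr (hsymm : ∀ s ∈ S, s⁻¹ ∈ S) (hone : 1 ∉ S)
    (htree : (cayleyGraph S).IsTree) (w : G) :
    (S.card : ℝ) - 2 ≤ ∑ a ∈ S, radialIncr S a w := by
  rcases eq_or_ne w 1 with rfl | hw
  · rw [sum_radialIncr_one hone htree]
    linarith
  · exact (sum_radialIncr_of_ne_one hsymm hone htree hw).ge

end cayleyGraph

namespace ERW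

variable {G : Type*} [Group G] [DecidableEq G] {d : ℕ} {p : ℝ}
  {Ω : Type*} {mΩ : MeasurableSpace Ω} {P : Measure Ω} (E : ERW G d p Ω P)

section History

/-- The first `n` steps of the walk, as a random variable with values in a finite type. -/
def history (n : ℕ) (ω : Ω) : Finset.Icc 1 n → E.S :=
  fun k => ⟨E.g k ω, E.mem_S k (Finset.mem_Icc.1 k.2).1 ω⟩

lemma history_eq_iff {n : ℕ} {ω ω' : Ω} :
    E.history n ω = E.history n ω' ↔ ∀ k ∈ Finset.Icc 1 n, E.g k ω = E.g k ω' := by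
  simp only [history, funext_iff, Subtype.forall, Subtype.mk.injEq]

lemma step_factorsThrough_history {k n : ℕ} (hk : k ∈ Finset.Icc 1 n) :
    (E.g k).FactorsThrough (E.history n) :=
  fun _ _ h => E.history_eq_iff.1 h k hk

lemma history_factorsThrough_history {m n : ℕ} (hmn : m ≤ n) :
    (E.history m).FactorsThrough (E.history n) :=
  fun _ _ h => E.history_eq_iff.2 fun k hk =>
    E.history_eq_iff.1 h k (Finset.Icc_subset_Icc_right hmn hk)

lemma pos_factorsThrough_history (n : ℕ) : (E.pos n).FactorsThrough (E.history n) := by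
  intro ω ω' h
  induction n with
  | zero => rfl
  | succ n ih =>
    simp only [pos, E.step_factorsThrough_history (Finset.right_mem_Icc.2 n.succ_pos) h,
      ih (E.history_factorsThrough_history n.le_succ h)]

lemma count_factorsThrough_history (a : G) (n : ℕ) :
    (E.count a n).FactorsThrough (E.history n) := by
  intro ω ω' h
  rw [count, count, Finset.filter_congr fun k hk => by rw [E.step_factorsThrough_history hk h]]

lemma history_preimage_singleton {n : ℕ} (s : Finset.Icc 1 n → E.S) :
    E.history n ⁻¹' {s} = ⋂ k : Finset.Icc 1 n, {ω | E.g k ω = s k} := by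
  ext ω
  simp [history, funext_iff, Subtype.ext_iff]

lemma comap_history_le (n : ℕ) : MeasurableSpace.comap (E.history n) ⊤ ≤ mΩ := by
  refine comap_top_le_of_countable fun s => ?_
  rw [E.history_preimage_singleton]
  exact MeasurableSet.iInter fun k => E.meas_g k _

lemma filt_eq_comap_history (n : ℕ) :
    E.filt n = MeasurableSpace.comap (E.history n) ⊤ := by
  refine le_antisymm (iSup₂_le fun k hk => ?_)
    (comap_top_le_of_countable (mΩ := E.filt n) fun s => ?_)
  · let _ : MeasurableSpace G := ⊤
    exact (measurable_comap_top_of_factorsThrough (E.step_factorsThrough_history hk)).comap_le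
  · rw [E.history_preimage_singleton]
    refine @MeasurableSet.iInter _ _ (E.filt n) _ _ fun k => ?_
    exact (le_iSup₂_of_le k.1 k.2 le_rfl : MeasurableSpace.comap (E.g k) ⊤ ≤ E.filt n) _
      ⟨{(s k : G)}, trivial, rfl⟩

/-- The natural filtration `E.filt`, bundled. -/
def filtration : Filtration ℕ mΩ where
  seq := E.filt
  mono' _ _ hmn := biSup_mono fun _ hk => Finset.Icc_subset_Icc_right hmn hk
  le' n := E.filt_eq_comap_history n ▸ E.comap_history_le n

lemma stronglyAdapted_of_factorsThrough_history {f : ℕ → Ω → ℝ}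
    (hf : ∀ n, (f n).FactorsThrough (E.history n)) : StronglyAdapted E.filtration f := by
  intro n
  refine Measurable.stronglyMeasurable ?_
  change Measurable[E.filt n] (f n)
  rw [E.filt_eq_comap_history]
  exact measurable_comap_top_of_factorsThrough (hf n)

end History

section Transition

/-- The conditional probability `p N_n(a) / n + (1 - p) / (d - 1) * (n - N_n(a)) / n` that
the step after time `n ≥ 1` is `a`. -/
def stepProb (a : G) (n : ℕ) (ω : Ω) : ℝ :=
  p * ((E.count a n ω : ℝ) / n) + (1 - p) / ((d : ℝ) - 1) * (((n : ℝ) - E.count a n ω) / n)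

lemma measureReal_step_inter_history {n : ℕ} (hn : 1 ≤ n) {a : G} (ha : a ∈ E.S) (ω : Ω) :
    P.real (E.g (n + 1) ⁻¹' {a} ∩ E.history n ⁻¹' {E.history n ω}) =
      E.stepProb a n ω * P.real (E.history n ⁻¹' {E.history n ω}) := by
  have hfibre : E.history n ⁻¹' {E.history n ω} =
      {ω' | ∀ k ∈ Finset.Icc 1 n, E.g k ω' = E.g k ω} := by
    ext ω'
    exact E.history_eq_iff
  rw [Set.inter_comm, hfibre]
  exact E.update n hn (fun k => E.g k ω) a ha

variable [IsFiniteMeasure P]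

theorem condExp_step {n : ℕ} (hn : 1 ≤ n) {ψ : G → Ω → ℝ}
    (hψ : ∀ a, (ψ a).FactorsThrough (E.history n)) :
    P[fun ω => ψ (E.g (n + 1) ω) ω | E.filt n]
      =ᵐ[P] fun ω => ∑ a ∈ E.S, E.stepProb a n ω * ψ a ω := by
  have hfactors : (fun ω => ψ (E.g (n + 1) ω) ω).FactorsThrough (E.history (n + 1)) := by
    intro ω ω' h
    simp only [E.step_factorsThrough_history (Finset.right_mem_Icc.2 n.succ_pos) h]
    exact hψ _ (E.history_factorsThrough_history n.le_succ h)
  have hint : Integrable (fun ω => ψ (E.g (n + 1) ω) ω) P := memLp_one_iff_integrable.1 <|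
    memLp_of_factorsThrough (E.comap_history_le (n + 1)) hfactors 1
  rw [E.filt_eq_comap_history]
  refine (ae_eq_condExp_comap_of_finite (E.comap_history_le n) hint ?_ fun ω => ?_).symm
  · intro ω ω' h
    simp only [stepProb, E.count_factorsThrough_history _ n h, hψ _ h]
  have hA : MeasurableSet (E.history n ⁻¹' {E.history n ω}) :=
    E.comap_history_le n _ ⟨_, trivial, rfl⟩
  have hfreeze : Set.EqOn (fun ω' => ψ (E.g (n + 1) ω') ω') (fun ω' => ψ (E.g (n + 1) ω') ω)
      (E.history n ⁻¹' {E.history n ω}) := fun ω' hω' => hψ _ hω'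
  rw [setIntegral_congr_fun hA hfreeze,
    setIntegral_comp_eq_sum (φ := fun a => ψ a ω) (E.mem_S (n + 1) n.succ_pos)
      (fun a _ => E.meas_g (n + 1) a) (hint.integrableOn.congr_fun hfreeze hA), Finset.sum_mul]
  refine Finset.sum_congr rfl fun a ha => ?_
  rw [E.measureReal_step_inter_history hn ha]
  ring

end Transition

section StepFrequency

lemma count_succ (a : G) (n : ℕ) (ω : Ω) :
    E.count a (n + 1) ω = E.count a n ω + if E.g (n + 1) ω = a then 1 else 0 := by
  simp only [count, Finset.card_filter, Finset.sum_Icc_succ_top n.succ_pos]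

lemma count_le (a : G) (n : ℕ) (ω : Ω) : E.count a n ω ≤ n :=
  (Finset.card_filter_le _ _).trans (by simp)

/-- The factor `(p d - 1) / (d - 1)` by which one step of the walk contracts the deviation of
the step frequencies from the uniform law. -/
def memoryFactor (p : ℝ) (d : ℕ) : ℝ := (p * d - 1) / (d - 1)

lemma abs_memoryFactor_lt_one (hd : 3 ≤ d) (hp0 : 0 ≤ p) (hp1 : p < 1) :
    |memoryFactor p d| < 1 := by
  have hd' : (3 : ℝ) ≤ d := by exact_mod_cast hd
  rw [memoryFactor, abs_lt, lt_div_iff₀ (by linarith), div_lt_one (by linarith)]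
  constructor <;> nlinarith

lemma stepProb_sub_inv (hd : 2 ≤ d) (a : G) {n : ℕ} (hn : 1 ≤ n) (ω : Ω) :
    E.stepProb a n ω - 1 / d = memoryFactor p d * ((E.count a n ω : ℝ) / n - 1 / d) := by
  have hd' : (2 : ℝ) ≤ d := by exact_mod_cast hd
  have hd0 : (d : ℝ) ≠ 0 := by linarith
  have hd1 : (d : ℝ) - 1 ≠ 0 := by linarith
  have hn0 : (n : ℝ) ≠ 0 := by positivity
  rw [stepProb, memoryFactor]
  field_simp
  ring

variable [IsFiniteMeasure P]

lemma condExp_count_succ_sub {a : G} (ha : a ∈ E.S) {n : ℕ} (hn : 1 ≤ n) :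
    P[fun ω => (E.count a (n + 1) ω : ℝ) - E.count a n ω | E.filt n] =ᵐ[P] E.stepProb a n := by
  have hincr : (fun ω => (E.count a (n + 1) ω : ℝ) - E.count a n ω) =
      fun ω => if E.g (n + 1) ω = a then 1 else 0 := by
    ext ω
    simp [E.count_succ]
  rw [hincr]
  refine (E.condExp_step hn (ψ := fun b _ => if b = a then 1 else 0)
    fun _ _ _ _ => rfl).trans (.of_eq ?_)
  ext ω
  simp [ha]

lemma ae_tendsto_count_martingalePart_div (a : G) :
    ∀ᵐ ω ∂P, Tendsto (fun n : ℕ =>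
      martingalePart (fun n ω => (E.count a n ω : ℝ)) E.filtration P n ω / n) atTop (nhds 0) := by
  have hfactors (n : ℕ) : (fun ω => (E.count a n ω : ℝ)).FactorsThrough (E.history n) :=
    fun _ _ h => congrArg Nat.cast (E.count_factorsThrough_history a n h)
  refine ae_tendsto_martingalePart_div_zero (R := 1)
    (E.stronglyAdapted_of_factorsThrough_history hfactors)
    (fun n => memLp_of_factorsThrough (E.comap_history_le n) (hfactors n) 2)
    (.of_forall fun ω n => ?_)
  rw [E.count_succ]
  split_ifs <;> simp

theorem ae_tendsto_count_div (hd : 3 ≤ d) (hp0 : 0 ≤ p) (hp1 : p < 1) {a : G} (ha : a ∈ E.S) :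
    ∀ᵐ ω ∂P, Tendsto (fun n : ℕ => (E.count a n ω : ℝ) / n) atTop (nhds (1 / d)) := by
  have hcond : ∀ᵐ ω ∂P, ∀ n, 1 ≤ n →
      (P[fun ω => (E.count a (n + 1) ω : ℝ) - E.count a n ω | E.filt n]) ω = E.stepProb a n ω :=
    ae_all_iff.2 fun n => eventually_imp_distrib_left.2 fun hn => E.condExp_count_succ_sub ha hn
  filter_upwards [hcond, E.ae_tendsto_count_martingalePart_div a] with ω hω hmart
  refine tendsto_sub_nhds_zero_iff.1 (tendsto_zero_of_eq_cesaro_add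
    (y := fun n => (P[fun ω => (E.count a (n + 1) ω : ℝ) - E.count a n ω | E.filt n]) ω - 1 / d)
    (abs_nonneg _) (abs_memoryFactor_lt_one hd hp0 hp1) ?_ ?_ hmart ?_)
  · refine isBoundedUnder_of ⟨1 + ‖(1 / d : ℝ)‖, fun n => (norm_sub_le _ _).trans ?_⟩
    gcongr
    rw [Real.norm_of_nonneg (by positivity)]
    exact div_le_one_of_le₀ (by exact_mod_cast E.count_le a n ω) n.cast_nonneg
  · filter_upwards [eventually_ge_atTop 1] with n hn
    rw [hω n hn, E.stepProb_sub_inv (by omega) a hn, norm_mul, Real.norm_eq_abs]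
  · filter_upwards [eventually_ge_atTop 1] with n hn
    have hn0 : (n : ℝ) ≠ 0 := by positivity
    have hdecomp := div_eq_cesaro_condExp_add_martingalePart_div (μ := P) (ℱ := E.filtration)
      (fun n ω => (E.count a n ω : ℝ)) n ω
    rw [hdecomp, smul_eq_mul, Finset.sum_sub_distrib, mul_sub, Finset.sum_const,
      Finset.card_range, nsmul_eq_mul, inv_mul_cancel_left₀ hn0, add_sub_right_comm]
    rfl

lemma ae_tendsto_stepProb (hd : 3 ≤ d) (hp0 : 0 ≤ p) (hp1 : p < 1) :
    ∀ᵐ ω ∂P, ∀ a ∈ E.S, Tendsto (fun n : ℕ => E.stepProb a n ω) atTop (nhds (1 / d)) := by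
  refine (E.S.eventually_all).2 fun a ha => ?_
  filter_upwards [E.ae_tendsto_count_div hd hp0 hp1 ha] with ω hω
  have hzero : Tendsto (fun n : ℕ => memoryFactor p d * ((E.count a n ω : ℝ) / n - 1 / d))
      atTop (nhds 0) := by
    simpa using (tendsto_sub_nhds_zero_iff.2 hω).const_mul (memoryFactor p d)
  refine tendsto_sub_nhds_zero_iff.1 (hzero.congr' ?_)
  filter_upwards [eventually_ge_atTop 1] with n hn
  rw [E.stepProb_sub_inv (by omega) a hn]

end StepFrequency

section Drift

open cayleyGraph

lemma dist_succ_sub (n : ℕ) (ω : Ω) :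
    (E.dist (n + 1) ω : ℝ) - E.dist n ω = radialIncr E.S (E.g (n + 1) ω) (E.pos n ω) :=
  rfl

lemma dist_factorsThrough_history (n : ℕ) :
    (fun ω => (E.dist n ω : ℝ)).FactorsThrough (E.history n) :=
  fun _ _ h => by simp only [dist, E.pos_factorsThrough_history n h]

lemma one_sub_two_div_le_sum_radialIncr_div (hd : 1 ≤ d) (w : G) :
    1 - 2 / (d : ℝ) ≤ (∑ a ∈ E.S, radialIncr E.S a w) / d := by
  have hd0 : (0 : ℝ) < d := by exact_mod_cast hd
  rw [one_sub_div hd0.ne']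
  gcongr
  simpa [E.card_S] using card_sub_two_le_sum_radialIncr E.symm_S E.one_not_mem E.tree w

variable [IsFiniteMeasure P]

lemma memLp_dist (n : ℕ) : MemLp (fun ω => (E.dist n ω : ℝ)) 2 P :=
  memLp_of_factorsThrough (E.comap_history_le n) (E.dist_factorsThrough_history n) 2

lemma ae_tendsto_dist_martingalePart_div :
    ∀ᵐ ω ∂P, Tendsto (fun n : ℕ =>
      martingalePart (fun n ω => (E.dist n ω : ℝ)) E.filtration P n ω / n) atTop (nhds 0) := by
  refine ae_tendsto_martingalePart_div_zero (R := 1)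
    (E.stronglyAdapted_of_factorsThrough_history E.dist_factorsThrough_history) E.memLp_dist
    (.of_forall fun ω n => ?_)
  rw [E.dist_succ_sub]
  rcases radialIncr_eq_one_or_neg_one E.one_not_mem E.tree (E.mem_S (n + 1) n.succ_pos ω)
    (E.pos n ω) with h | h <;> simp [h]

lemma drift_ae_eq {n : ℕ} (hn : 1 ≤ n) :
    E.drift n =ᵐ[P] fun ω => ∑ a ∈ E.S, E.stepProb a n ω * radialIncr E.S a (E.pos n ω) :=
  E.condExp_step hn (ψ := fun a ω => radialIncr E.S a (E.pos n ω))
    fun a _ _ h => congrArg (radialIncr E.S a) (E.pos_factorsThrough_history n h)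

lemma ae_tendsto_drift_sub (hd : 3 ≤ d) (hp0 : 0 ≤ p) (hp1 : p < 1) :
    ∀ᵐ ω ∂P, Tendsto (fun n => E.drift n ω - (∑ a ∈ E.S, radialIncr E.S a (E.pos n ω)) / d)
      atTop (nhds 0) := by
  have hdrift : ∀ᵐ ω ∂P, ∀ n, 1 ≤ n →
      E.drift n ω = ∑ a ∈ E.S, E.stepProb a n ω * radialIncr E.S a (E.pos n ω) :=
    ae_all_iff.2 fun n => eventually_imp_distrib_left.2 fun hn => E.drift_ae_eq hn
  filter_upwards [hdrift, E.ae_tendsto_stepProb hd hp0 hp1] with ω hω hprob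
  have hterm : ∀ a ∈ E.S, Tendsto (fun n =>
      (E.stepProb a n ω - 1 / d) * radialIncr E.S a (E.pos n ω)) atTop (nhds 0) := by
    intro a ha
    refine (tendsto_sub_nhds_zero_iff.2 (hprob a ha)).zero_mul_isBoundedUnder_le
      (isBoundedUnder_of ⟨1, fun n => ?_⟩)
    rcases radialIncr_eq_one_or_neg_one E.one_not_mem E.tree ha (E.pos n ω) with h | h <;>
      simp [h]
  rw [← Finset.sum_const_zero (s := E.S)]
  refine (tendsto_finsetSum E.S hterm).congr' ?_
  filter_upwards [eventually_ge_atTop 1] with n hn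
  rw [hω n hn, Finset.sum_div, ← Finset.sum_sub_distrib]
  exact Finset.sum_congr rfl fun a _ => by ring

theorem ae_eventually_pos_ne_one (hd : 3 ≤ d) (hp0 : 0 ≤ p) (hp1 : p < 1) :
    ∀ᵐ ω ∂P, ∀ᶠ n in atTop, E.pos n ω ≠ 1 := by
  have hspeed : (0 : ℝ) < 1 - 2 / d := by
    have : (3 : ℝ) ≤ d := by exact_mod_cast hd
    rw [sub_pos, div_lt_one] <;> linarith
  filter_upwards [E.ae_tendsto_drift_sub hd hp0 hp1, E.ae_tendsto_dist_martingalePart_div]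
    with ω hdrift hmart
  have herr := hdrift.cesaro.add hmart
  rw [add_zero] at herr
  filter_upwards [eventually_ge_atTop 1, herr.eventually_const_lt (neg_lt_zero.2 hspeed)]
    with n hn hlt hroot
  have hn0 : (0 : ℝ) < n := by exact_mod_cast hn
  have hdecomp := div_eq_cesaro_condExp_add_martingalePart_div (μ := P) (ℱ := E.filtration)
    (fun n ω => (E.dist n ω : ℝ)) n ω
  have hmean : 1 - 2 / (d : ℝ) ≤ (n : ℝ)⁻¹ *
      ∑ k ∈ Finset.range n, (∑ a ∈ E.S, radialIncr E.S a (E.pos k ω)) / d := by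
    rw [le_inv_mul_iff₀ hn0]
    simpa using Finset.card_nsmul_le_sum (Finset.range n) _ _ fun k _ =>
      E.one_sub_two_div_le_sum_radialIncr_div (by omega) (E.pos k ω)
  simp only [Finset.sum_sub_distrib, mul_sub] at hlt
  have hdist : (E.dist n ω : ℝ) / n = 0 := by simp [dist, hroot]
  rw [hdist] at hdecomp
  change 0 = (n : ℝ)⁻¹ * ∑ k ∈ Finset.range n, E.drift k ω + _ at hdecomp
  linarith

theorem ae_tendsto_drift (hd : 3 ≤ d) (hp0 : 0 ≤ p) (hp1 : p < 1) :
    ∀ᵐ ω ∂P, Tendsto (fun n => E.drift n ω) atTop (nhds (1 - 2 / d)) := by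
  have hd0 : (d : ℝ) ≠ 0 := by positivity
  filter_upwards [E.ae_tendsto_drift_sub hd hp0 hp1, E.ae_eventually_pos_ne_one hd hp0 hp1]
    with ω hdrift hpos
  refine tendsto_sub_nhds_zero_iff.1 (hdrift.congr' ?_)
  filter_upwards [hpos] with n hn
  rw [sum_radialIncr_of_ne_one E.symm_S E.one_not_mem E.tree hn, E.card_S, sub_div,
    div_self hd0]

end Drift

section QuadraticVariation

variable [IsFiniteMeasure P]

lemma condExp_mdiff_succ_sq (n : ℕ) :
    P[fun ω => E.mdiff (n + 1) ω ^ 2 | E.filt n] =ᵐ[P] fun ω => 1 - E.drift n ω ^ 2 :=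
  condExp_sq_sub_condExp_of_sq_eq_one (E.filtration.le n)
    ((E.memLp_dist (n + 1)).sub (E.memLp_dist n)) <| .of_forall fun ω =>
      cayleyGraph.radialIncr_sq E.one_not_mem E.tree (E.mem_S (n + 1) n.succ_pos ω) (E.pos n ω)

theorem ae_sum_condExp_mdiff_sq : ∀ᵐ ω ∂P, ∀ n : ℕ,
    ∑ k ∈ Finset.Icc 1 n, (P[fun ω' => E.mdiff k ω' ^ 2 | E.filt (k - 1)]) ω
      = n - ∑ k ∈ Finset.range n, E.drift k ω ^ 2 := by
  filter_upwards [ae_all_iff.2 E.condExp_mdiff_succ_sq] with ω hω n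
  induction n with
  | zero => simp
  | succ n ih =>
    rw [Finset.sum_Icc_succ_top n.succ_pos, ih, Finset.sum_range_succ, Nat.add_sub_cancel, hω n]
    push_cast
    ring

end QuadraticVariation

end ERW

/-- the predictable quadratic variation
`⟨M⟩ n = ∑_{k=1}^n E[Y k ^ 2 | F (k-1)]` of the martingale `M n = ∑_{k=1}^n Y k`
(with `Y k = Δ k - Δ (k-1) - G (k-1)` and `G k = E[Δ (k+1) - Δ k | F k]`) equals
`n - ∑_{k=0}^{n-1} (G k)^2` (a.s.), and `⟨M⟩ n / n → 4(d-1)/d²` almost surely. -/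
theorem erw_quadratic_variation
    {G : Type*} [Group G] [DecidableEq G] {Ω : Type*} [MeasurableSpace Ω]
    {P : Measure Ω} [IsProbabilityMeasure P]
    (d : ℕ) (hd : 3 ≤ d) (p : ℝ) (hp0 : 0 ≤ p) (hp1 : p < 1)
    (E : ERW G d p Ω P) :
    (∀ n : ℕ, 1 ≤ n → ∀ᵐ ω ∂P,
      ∑ k ∈ Finset.Icc 1 n,
          (P[fun ω' => (E.mdiff k ω') ^ 2 | E.filt (k - 1)]) ω
        = (n : ℝ) - ∑ k ∈ Finset.range n, (E.drift k ω) ^ 2) ∧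
    ∀ᵐ ω ∂P,
      Tendsto (fun n : ℕ =>
          (∑ k ∈ Finset.Icc 1 n,
            (P[fun ω' => (E.mdiff k ω') ^ 2 | E.filt (k - 1)]) ω) / n)
        atTop (nhds (4 * ((d : ℝ) - 1) / (d : ℝ) ^ 2)) := by
  refine ⟨fun n _ => E.ae_sum_condExp_mdiff_sq.mono fun ω hω => hω n, ?_⟩
  have hlimit : 4 * ((d : ℝ) - 1) / (d : ℝ) ^ 2 = 1 - (1 - 2 / d) ^ 2 := by
    have hd0 : (d : ℝ) ≠ 0 := by positivity
    field_simp
    ring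
  rw [hlimit]
  filter_upwards [E.ae_sum_condExp_mdiff_sq, E.ae_tendsto_drift hd hp0 hp1] with ω hsum hdrift
  refine ((hdrift.pow 2).cesaro.const_sub 1).congr' ?_
  filter_upwards [eventually_ne_atTop 0] with n hn
  rw [hsum, sub_div, div_self (Nat.cast_ne_zero.2 hn), inv_mul_eq_div]

end
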